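/- Fix an integer B ≥ 2. Let θ, X_1, …, X_B be independent random variables, each uniformly distributed on {1, …, B}, and set y_t = +1 if X_t = θ and y_t = −1 otherwise, for t = 1, …, B. A deterministic learner is a family of functions g_1, …, g_B, where g_t maps the observed history ((X_1, y_1), …, (X_{t−1}, y_{t−1}), X_t) to a decision in {+1, −1, ⊥}. Let M be the number of rounds t ∈ {1,…,B} on which the learner's decision lies in {+1,−1} and differs from y_t (mistakes), and let A be the number of rounds on which the decision is ⊥ (abstentions). Then for every deterministic learner, E[M + A/B] ≥ (1 − e^{−1})²/2 − 1/B². -/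

import Mathlib

open MeasureTheory ProbabilityTheory

/-- The label of the instance `v` under the hidden target `θ`. -/
def targetLabel {B : ℕ} (θ v : Fin B) : ℤ := if v = θ then 1 else -1

/-- The instances appearing before round `t`. -/
def seenBefore {B : ℕ} (x : Fin B → Fin B) (t : Fin B) : Finset (Fin B) :=
  (Finset.Iio t).image x

/-- The cost of one round: `1 / B` for an abstention and `1` for a mistake. -/
noncomputable def roundCost (B : ℕ) (d : Option ℤ) (l : ℤ) : ℝ :=
  if d = none then 1 / (B : ℝ) else if d = some l then 0 else 1

/-- The decision of the learner `g` in round `t` when the target is `θ` and the instances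
are `x`. -/
def learnerDecision {B : ℕ} (g : (t : ℕ) → (Fin t → Fin B × ℤ) → Fin B → Option ℤ)
    (θ : Fin B) (x : Fin B → Fin B) (t : Fin B) : Option ℤ :=
  g t.1 (fun s : Fin t.1 => (x ⟨s.1, lt_trans s.2 t.2⟩,
    targetLabel θ (x ⟨s.1, lt_trans s.2 t.2⟩))) (x t)

lemma roundCost_nonneg (B : ℕ) (d : Option ℤ) (l : ℤ) : 0 ≤ roundCost B d l := by
  unfold roundCost
  split_ifs <;> positivity

lemma card_seenBefore_le {B : ℕ} (x : Fin B → Fin B) (t : Fin B) :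
    (seenBefore x t).card ≤ t :=
  Finset.card_image_le.trans_eq (Fin.card_Iio t)

lemma seenBefore_update {B : ℕ} (x : Fin B → Fin B) (t v : Fin B) :
    seenBefore (Function.update x t v) t = seenBefore x t := by
  refine Finset.image_congr fun s hs => ?_
  have hs : s < t := by simpa using hs
  exact Function.update_of_ne hs.ne _ _

lemma card_compl_seenBefore_ge {B : ℕ} (x : Fin B → Fin B) (t : Fin B) :
    (B : ℝ) - t ≤ ((seenBefore x t)ᶜ.card : ℝ) := by
  have h := card_seenBefore_le x t
  have h2 := Finset.card_add_card_compl (seenBefore x t)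
  rw [Fintype.card_fin] at h2
  have : B ≤ (seenBefore x t)ᶜ.card + t := by omega
  have : (B : ℝ) ≤ (seenBefore x t)ᶜ.card + (t : ℕ) := by exact_mod_cast this
  linarith

/-- The labels seen while the target is unseen do not depend on the target. -/
lemma learnerDecision_of_notMem_seenBefore {B : ℕ}
    (g : (t : ℕ) → (Fin t → Fin B × ℤ) → Fin B → Option ℤ)
    (θ : Fin B) (x : Fin B → Fin B) (t : Fin B) (h : θ ∉ seenBefore x t) :
    learnerDecision g θ x t =
      g t.1 (fun s : Fin t.1 => (x ⟨s.1, lt_trans s.2 t.2⟩, -1)) (x t) := by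
  unfold learnerDecision
  congr 1
  funext s
  have hs : x ⟨s.1, lt_trans s.2 t.2⟩ ≠ θ := fun e =>
    h (Finset.mem_image.2 ⟨_, Finset.mem_Iio.2 s.2, e⟩)
  simp [targetLabel, hs]

/-- On a fresh instance, any fixed decision costs at least `1 / B` on average over a set of
at least two candidate targets containing that instance. -/
lemma sum_roundCost_ge {B : ℕ} (hB : 2 ≤ B) (U : Finset (Fin B)) (v : Fin B) (hv : v ∈ U)
    (hU : 2 ≤ U.card) (d : Option ℤ) (hd : d = some 1 ∨ d = some (-1) ∨ d = none) :
    (U.card : ℝ) / B ≤ ∑ θ ∈ U, roundCost B d (targetLabel θ v) := by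
  have hBr : (2 : ℝ) ≤ B := by exact_mod_cast hB
  have hUr : (2 : ℝ) ≤ U.card := by exact_mod_cast hU
  have hUB : (U.card : ℝ) ≤ B := by
    exact_mod_cast (Finset.card_le_univ U).trans_eq (Fintype.card_fin B)
  have hcost : ∀ θ, roundCost B (some 1) (targetLabel θ v) = 1 - if v = θ then 1 else 0 := by
    intro θ
    by_cases h : v = θ <;> simp [roundCost, targetLabel, h]
  have hcost' : ∀ θ, roundCost B (some (-1)) (targetLabel θ v) = if v = θ then 1 else 0 := by
    intro θ
    by_cases h : v = θ <;> simp [roundCost, targetLabel, h]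
  rcases hd with rfl | rfl | rfl
  · simp only [hcost, Finset.sum_sub_distrib, Finset.sum_ite_eq, hv, if_true]
    rw [div_le_iff₀ (by linarith)]
    simp only [Finset.sum_const, nsmul_eq_mul, mul_one]
    nlinarith
  · simp only [hcost', Finset.sum_ite_eq, hv, if_true]
    rw [div_le_one (by linarith)]
    exact hUB
  · simp [roundCost, div_eq_mul_inv]

lemma sum_target_roundCost_ge {B : ℕ} (hB : 2 ≤ B)
    (g : (t : ℕ) → (Fin t → Fin B × ℤ) → Fin B → Option ℤ)
    (hg : ∀ t hist x, g t hist x = some 1 ∨ g t hist x = some (-1) ∨ g t hist x = none)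
    (x : Fin B → Fin B) (t : Fin B) (ht : (t : ℕ) + 2 ≤ B) :
    (if x t ∉ seenBefore x t then ((B : ℝ) - t) / B else 0) ≤
      ∑ θ, roundCost B (learnerDecision g θ x t) (targetLabel θ (x t)) := by
  by_cases hx : x t ∉ seenBefore x t
  · rw [if_pos hx]
    have hcard := card_compl_seenBefore_ge x t
    have htr : ((t : ℕ) : ℝ) + 2 ≤ B := by exact_mod_cast ht
    have h2 : 2 ≤ (seenBefore x t)ᶜ.card := by
      have : (2 : ℝ) ≤ (seenBefore x t)ᶜ.card := by linarith
      exact_mod_cast this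
    calc ((B : ℝ) - t) / B ≤ ((seenBefore x t)ᶜ.card : ℝ) / B := by gcongr
      _ ≤ _ := sum_roundCost_ge hB _ (x t) (Finset.mem_compl.2 hx) h2 _ (hg _ _ _)
      _ = ∑ θ ∈ (seenBefore x t)ᶜ,
            roundCost B (learnerDecision g θ x t) (targetLabel θ (x t)) :=
          Finset.sum_congr rfl fun θ hθ => by
            rw [learnerDecision_of_notMem_seenBefore g θ x t (Finset.mem_compl.1 hθ)]
      _ ≤ _ := Finset.sum_le_sum_of_subset_of_nonneg (Finset.subset_univ _)
            fun _ _ _ => roundCost_nonneg _ _ _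
  · rw [if_neg hx]
    exact Finset.sum_nonneg fun _ _ => roundCost_nonneg _ _ _

/-- Resampling one coordinate leaves the uniform average unchanged. -/
lemma sum_sum_update {ι α : Type*} [Fintype ι] [DecidableEq ι] [Fintype α]
    (t : ι) (F : (ι → α) → ℝ) :
    ∑ x : ι → α, ∑ v, F (Function.update x t v) = Fintype.card α * ∑ x, F x := by
  have hup : ∀ (p : α × ({j // j ≠ t} → α)) (v : α),
      Function.update ((Equiv.funSplitAt t α).symm p) t v =
        (Equiv.funSplitAt t α).symm (v, p.2) := by
    intro p v
    funext j
    by_cases h : j = t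
    · subst h; simp [Equiv.funSplitAt, Equiv.piSplitAt]
    · simp [Equiv.funSplitAt, Equiv.piSplitAt, h]
  rw [← (Equiv.funSplitAt t α).symm.sum_comp, ← (Equiv.funSplitAt t α).symm.sum_comp F]
  simp only [hup, Fintype.sum_prod_type]
  rw [Finset.sum_const, nsmul_eq_mul, Finset.card_univ, Finset.sum_comm]

lemma sum_fresh_ge {B : ℕ} (hB : 2 ≤ B) (t : Fin B) :
    (B : ℝ) ^ B * (((B : ℝ) - t) / B) ≤
      ∑ x : Fin B → Fin B, if x t ∉ seenBefore x t then (1 : ℝ) else 0 := by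
  have hBr : (0 : ℝ) < B := by exact_mod_cast (by omega : 0 < B)
  have h := sum_sum_update t
    (fun x : Fin B → Fin B => if x t ∉ seenBefore x t then (1 : ℝ) else 0)
  simp only [seenBefore_update, Function.update_self, Fintype.card_fin] at h
  have hlow : (B : ℝ) ^ B * ((B : ℝ) - t) ≤
      ∑ x : Fin B → Fin B, ∑ v, if v ∉ seenBefore x t then (1 : ℝ) else 0 := by
    calc (B : ℝ) ^ B * ((B : ℝ) - t) = ∑ _x : Fin B → Fin B, ((B : ℝ) - t) := by simp [mul_sub]
      _ ≤ _ := by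
        refine Finset.sum_le_sum fun x _ => (card_compl_seenBefore_ge x t).trans_eq ?_
        rw [Finset.sum_boole]
        congr 2
        ext; simp
  rw [h] at hlow
  rw [← mul_div_assoc, div_le_iff₀ hBr]
  linarith

lemma sum_roundCost_round_ge {B : ℕ} (hB : 2 ≤ B)
    (g : (t : ℕ) → (Fin t → Fin B × ℤ) → Fin B → Option ℤ)
    (hg : ∀ t hist x, g t hist x = some 1 ∨ g t hist x = some (-1) ∨ g t hist x = none)
    (t : Fin B) (ht : (t : ℕ) + 2 ≤ B) :
    (B : ℝ) ^ B * (((B : ℝ) - t) / B) ^ 2 ≤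
      ∑ x : Fin B → Fin B, ∑ θ,
        roundCost B (learnerDecision g θ x t) (targetLabel θ (x t)) := by
  have htr : ((t : ℕ) : ℝ) + 2 ≤ B := by exact_mod_cast ht
  calc (B : ℝ) ^ B * (((B : ℝ) - t) / B) ^ 2
      = ((B : ℝ) ^ B * (((B : ℝ) - t) / B)) * (((B : ℝ) - t) / B) := by ring
    _ ≤ (∑ x : Fin B → Fin B, if x t ∉ seenBefore x t then (1 : ℝ) else 0)
          * (((B : ℝ) - t) / B) :=
        mul_le_mul_of_nonneg_right (sum_fresh_ge hB t) (div_nonneg (by linarith) (by linarith))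
    _ = ∑ x : Fin B → Fin B, if x t ∉ seenBefore x t then ((B : ℝ) - t) / B else 0 := by
        simp only [Finset.sum_mul, ite_mul, one_mul, zero_mul]
    _ ≤ _ := Finset.sum_le_sum fun x _ => sum_target_roundCost_ge hB g hg x t ht

lemma sum_range_sub_sq (n : ℕ) (c : ℝ) (hc : c = n + 1) :
    ∑ s ∈ Finset.range n, (c - s) ^ 2 = c * (c + 1) * (2 * c + 1) / 6 - 1 := by
  subst hc
  induction n with
  | zero => norm_num
  | succ n ih =>
    rw [Finset.sum_range_succ']
    have : ∀ s ∈ Finset.range n, (((n + 1 : ℕ) : ℝ) + 1 - ((s + 1 : ℕ) : ℝ)) ^ 2 =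
        ((n : ℝ) + 1 - s) ^ 2 := fun s _ => by push_cast; ring
    rw [Finset.sum_congr rfl this, ih]
    push_cast
    ring

lemma sum_roundCost_total_ge {B : ℕ} (hB : 2 ≤ B)
    (g : (t : ℕ) → (Fin t → Fin B × ℤ) → Fin B → Option ℤ)
    (hg : ∀ t hist x, g t hist x = some 1 ∨ g t hist x = some (-1) ∨ g t hist x = none) :
    (B : ℝ) ^ (B + 1) / 3 ≤
      ∑ x : Fin B → Fin B, ∑ θ, ∑ t,
        roundCost B (learnerDecision g θ x t) (targetLabel θ (x t)) := by
  have hswap : ∑ x : Fin B → Fin B, ∑ θ, ∑ t,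
        roundCost B (learnerDecision g θ x t) (targetLabel θ (x t)) =
      ∑ t, ∑ x : Fin B → Fin B, ∑ θ,
        roundCost B (learnerDecision g θ x t) (targetLabel θ (x t)) := by
    rw [Finset.sum_comm (s := (Finset.univ : Finset (Fin B)))]
    exact Finset.sum_congr rfl fun x _ => Finset.sum_comm
  obtain ⟨n, rfl⟩ : ∃ n, B = n + 1 := ⟨B - 1, by omega⟩
  rw [hswap, Fin.sum_univ_castSucc]
  have hlast : 0 ≤ ∑ x : Fin (n + 1) → Fin (n + 1), ∑ θ,
      roundCost (n + 1) (learnerDecision g θ x (Fin.last n))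
        (targetLabel θ (x (Fin.last n))) :=
    Finset.sum_nonneg fun _ _ => Finset.sum_nonneg fun _ _ => roundCost_nonneg _ _ _
  refine le_add_of_le_of_nonneg ?_ hlast
  refine le_trans ?_ (Finset.sum_le_sum fun t _ =>
    sum_roundCost_round_ge hB g hg (Fin.castSucc t) (by simp))
  have hn : (1 : ℝ) ≤ n := by exact_mod_cast (by omega : 1 ≤ n)
  simp only [Fin.val_castSucc, div_pow]
  rw [← Finset.mul_sum, ← Finset.sum_div,
    Fin.sum_univ_eq_sum_range (fun s => (((n + 1 : ℕ) : ℝ) - (s : ℝ)) ^ 2) n,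
    sum_range_sub_sq n _ (by push_cast; rfl), pow_succ, mul_div_assoc]
  refine mul_le_mul_of_nonneg_left ?_ (by positivity)
  rw [le_div_iff₀ (by positivity)]
  push_cast
  nlinarith

lemma one_sub_exp_neg_one_sq_le : (1 - Real.exp (-1)) ^ 2 / 2 ≤ 1 / 3 := by
  have h : (1 : ℝ) / 3 ≤ Real.exp (-1) := by
    rw [Real.exp_neg, ← one_div]
    exact one_div_le_one_div_of_le (Real.exp_pos 1) (by linarith [Real.exp_one_lt_d9])
  have h' : Real.exp (-1) ≤ 1 := Real.exp_le_one_iff.2 (by norm_num)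
  nlinarith

/-- The expectation of a function of finitely many independent uniform variables is its
uniform average. -/
lemma integral_comp_of_iIndepFun_uniform {Ω ι : Type*} [MeasurableSpace Ω] {μ : Measure Ω}
    [IsProbabilityMeasure μ] [Fintype ι] [DecidableEq ι] {B : ℕ} (Z : ι → Ω → Fin B)
    (hZ : ∀ i, Measurable (Z i)) (hindep : iIndepFun Z μ)
    (hunif : ∀ i v, μ {ω | Z i ω = v} = (B : ENNReal)⁻¹) (F : (ι → Fin B) → ℝ) :
    ∫ ω, F (fun i => Z i ω) ∂μ = ((B : ℝ) ^ Fintype.card ι)⁻¹ * ∑ f, F f := by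
  have hmeas : Measurable fun ω i => Z i ω := measurable_pi_lambda _ hZ
  have hprob : IsProbabilityMeasure (μ.map fun ω i => Z i ω) :=
    Measure.isProbabilityMeasure_map hmeas.aemeasurable
  rw [← integral_map (φ := fun ω i => Z i ω) (f := F) hmeas.aemeasurable
    (measurable_of_finite F).aestronglyMeasurable, integral_fintype .of_finite, Finset.mul_sum]
  refine Finset.sum_congr rfl fun f _ => ?_
  have hpre : (fun ω i => Z i ω) ⁻¹' {f} = ⋂ i ∈ Finset.univ, Z i ⁻¹' {f i} := by
    ext ω
    simp [funext_iff]
  have hf : μ.map (fun ω i => Z i ω) {f} = ((B : ENNReal)⁻¹) ^ Fintype.card ι := by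
    rw [Measure.map_apply hmeas (measurableSet_singleton f), hpre,
      hindep.measure_inter_preimage_eq_mul Finset.univ (fun _ _ => measurableSet_singleton _)]
    exact (Finset.prod_congr rfl fun i _ => hunif i (f i)).trans (by simp)
  rw [measureReal_def, hf]
  simp

lemma mistakes_add_abstentions_eq {B : ℕ} (d : Fin B → Option ℤ) (l : Fin B → ℤ) :
    (((Finset.univ.filter fun t => (d t).isSome ∧ d t ≠ some (l t)).card : ℕ) : ℝ) +
      (((Finset.univ.filter fun t => d t = none).card : ℕ) : ℝ) / B =
      ∑ t, roundCost B (d t) (l t) := by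
  rw [← Finset.sum_boole, ← Finset.sum_boole, Finset.sum_div, ← Finset.sum_add_distrib]
  refine Finset.sum_congr rfl fun t _ => ?_
  unfold roundCost
  cases h : d t with
  | none => simp
  | some a => by_cases e : a = l t <;> simp [e]

/-- Fix `B ≥ 2`.  Let `θ, X 0, …, X (B-1)` be independent random variables, each uniform on
a `B`-element set (modeled as `Fin B`), and let `y t = +1` if `X t = θ`, `y t = -1`
otherwise.  A deterministic learner is a family of functions `g t` mapping the observed
history `((X 0, y 0), …, (X (t-1), y (t-1)))` together with the current instance `X t` to a
decision in `{+1, -1, ⊥}` (modeled as `Option ℤ` restricted to `some 1`, `some (-1)`,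
`none`).  Let `M` count the rounds where the learner predicts (`some`) and its prediction
differs from the label, and `A` the rounds where the learner abstains (`none`).  Then
`E[M + A/B] ≥ (1 - e⁻¹)²/2 - 1/B²`. -/
theorem stmt2 {Ω : Type*} [MeasurableSpace Ω] (μ : Measure Ω) [IsProbabilityMeasure μ]
    (B : ℕ) (hB : 2 ≤ B)
    (θ : Ω → Fin B) (X : Fin B → Ω → Fin B)
    (hθmeas : Measurable θ) (hXmeas : ∀ t, Measurable (X t))
    (hindep : iIndepFun
      (fun o : Option (Fin B) => o.elim θ X) μ)
    (hθunif : ∀ v, μ {ω | θ ω = v} = (B : ENNReal)⁻¹)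
    (hXunif : ∀ t v, μ {ω | X t ω = v} = (B : ENNReal)⁻¹)
    (y : Fin B → Ω → ℤ)
    (hy : ∀ t ω, y t ω = if X t ω = θ ω then 1 else -1)
    (g : (t : ℕ) → (Fin t → Fin B × ℤ) → Fin B → Option ℤ)
    (hg : ∀ t hist x, g t hist x = some 1 ∨ g t hist x = some (-1) ∨ g t hist x = none)
    (D : Fin B → Ω → Option ℤ)
    (hD : ∀ (t : Fin B) (ω : Ω), D t ω =
      g t.1 (fun s : Fin t.1 =>
          (X ⟨s.1, lt_trans s.2 t.2⟩ ω, y ⟨s.1, lt_trans s.2 t.2⟩ ω))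
        (X t ω))
    (M A : Ω → ℕ)
    (hM : ∀ ω, M ω = (Finset.univ.filter fun t : Fin B =>
        (D t ω).isSome ∧ D t ω ≠ some (y t ω)).card)
    (hA : ∀ ω, A ω = (Finset.univ.filter fun t : Fin B => D t ω = none).card) :
    (1 - Real.exp (-1)) ^ 2 / 2 - 1 / (B : ℝ) ^ 2 ≤
      ∫ ω, ((M ω : ℝ) + (A ω : ℝ) / B) ∂μ := by
  have hB0 : (0 : ℝ) < B := by exact_mod_cast (by omega : 0 < B)
  let F : (Option (Fin B) → Fin B) → ℝ := fun f =>
    ∑ t, roundCost B (learnerDecision g (f none) (fun s => f (some s)) t)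
      (targetLabel (f none) (f (some t)))
  have hcost : ∀ ω, ((M ω : ℝ) + (A ω : ℝ) / B) =
      F (fun o : Option (Fin B) => (o.elim θ X : Ω → Fin B) ω) := by
    intro ω
    rw [hM, hA, mistakes_add_abstentions_eq (fun t => D t ω) (fun t => y t ω)]
    refine Finset.sum_congr rfl fun t _ => ?_
    simp only [hD, hy]
    rfl
  have hsum : ∑ f, F f = ∑ x : Fin B → Fin B, ∑ θ', ∑ t,
      roundCost B (learnerDecision g θ' x t) (targetLabel θ' (x t)) := by
    rw [← (Equiv.piOptionEquivProd (β := fun _ : Option (Fin B) => Fin B)).symm.sum_comp,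
      Fintype.sum_prod_type_right]
    rfl
  simp only [hcost]
  rw [integral_comp_of_iIndepFun_uniform (fun o : Option (Fin B) => o.elim θ X)
    (by rintro (_ | t); exacts [hθmeas, hXmeas t]) hindep
    (by rintro (_ | t) v; exacts [hθunif v, hXunif t v]) F, hsum]
  have hcard : Fintype.card (Option (Fin B)) = B + 1 := by simp
  have hmain : (1 : ℝ) / 3 ≤ ((B : ℝ) ^ (B + 1))⁻¹ * ∑ x : Fin B → Fin B, ∑ θ', ∑ t,
      roundCost B (learnerDecision g θ' x t) (targetLabel θ' (x t)) := by
    rw [inv_mul_eq_div, le_div_iff₀ (by positivity)]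
    linarith [sum_roundCost_total_ge hB g hg]
  rw [hcard]
  have : (0 : ℝ) ≤ 1 / (B : ℝ) ^ 2 := by positivity
  linarith [one_sub_exp_neg_one_sq_le]
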